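/- Let γ ∈ (0, 1), ε ∈ [0, 1], and p ∈ (0, 1). Define c(p) = (2γp + 4γ(1 − ε)(1 − p)) / (p + 4(1 − p)). If p < (4 − 4γ(1 − ε)) / (3 + 2γ − 4γ(1 − ε)), then |c(p)| < 1, and consequently the sequence defined by θᵗ⁺¹ = c(p) θᵗ converges to 0 for every θ⁰ ∈ ℝ. Moreover, the threshold (4 − 4γ(1 − ε)) / (3 + 2γ − 4γ(1 − ε)) is strictly positive, so such a convergent update distribution always exists. -/

import Mathlib

open Filter

/-!
The factor `c(p)` is the average of the two one-state expansion rates `2γ` (at `s₁`) and `γ(1 - ε)`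
(at `s₂`) with weights `p` and `4(1 - p)`, so it is nonnegative, and it is less than `1` exactly
when `p (2γ - 1) < 4 (1 - p) (1 - γ(1 - ε))`. Solving this linear inequality for `p` produces the
threshold, and below it the iteration is a geometric sequence with ratio in `[0, 1)`.
-/

theorem tendsto_iterate_mul_left_zero {R : Type*} [SeminormedRing R] {c : R} (hc : ‖c‖ < 1)
    (x : R) : Tendsto (fun n : ℕ ↦ (c * ·)^[n] x) atTop (nhds 0) := by
  simpa only [mul_left_iterate, zero_mul] using
    (tendsto_pow_atTop_nhds_zero_of_norm_lt_one hc).mul_const x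

section TwoStateTD

variable {𝕜 : Type*} [Field 𝕜]

/-- The factor `c(p)` by which one step of exact TD multiplies the parameter of the two-state
divergence example: `w = c(p) θ` solves the first-order condition
`p (w - 2γθ) + 2 (1 - p) (2w - 2γ(1 - ε)θ) = 0`. Here `γ` is the discount, `ε` the termination
probability at `s₂` and `p` the weight of the update distribution on `s₁`. -/
def exactTDFactor (γ ε p : 𝕜) : 𝕜 :=
  (2 * γ * p + 4 * γ * (1 - ε) * (1 - p)) / (p + 4 * (1 - p))

/-- The critical weight on `s₁` of the update distribution, at which `exactTDFactor` equals `1`.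
It may exceed `1`, in which case every update distribution is below it. -/
def criticalWeight (γ ε : 𝕜) : 𝕜 :=
  (4 - 4 * γ * (1 - ε)) / (3 + 2 * γ - 4 * γ * (1 - ε))

variable [LinearOrder 𝕜] [IsStrictOrderedRing 𝕜] {γ ε p : 𝕜}

theorem exactTDFactor_nonneg (hγ : 0 ≤ γ) (hε : ε ≤ 1) (hp : p ∈ Set.Icc 0 1) :
    0 ≤ exactTDFactor γ ε p := by
  have hp' : 0 ≤ 1 - p := sub_nonneg.2 hp.2
  have hγε : 0 ≤ γ * (1 - ε) := mul_nonneg hγ (sub_nonneg.2 hε)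
  have hnum : 0 ≤ 2 * γ * p + 4 * γ * (1 - ε) * (1 - p) := by
    linarith [mul_nonneg hγ hp.1, mul_nonneg hγε hp']
  have hden : 0 ≤ p + 4 * (1 - p) := by linarith [hp.1]
  exact div_nonneg hnum hden

theorem criticalWeight_denom_pos (hγ : γ ∈ Set.Icc 0 1) (hε : 0 ≤ ε) :
    0 < 3 + 2 * γ - 4 * γ * (1 - ε) := by
  have hγε : 0 ≤ γ * ε := mul_nonneg hγ.1 hε
  linarith [hγ.2]

theorem criticalWeight_pos (hγ : γ ∈ Set.Ico 0 1) (hε : 0 ≤ ε) : 0 < criticalWeight γ ε := by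
  have hγε : 0 ≤ γ * ε := mul_nonneg hγ.1 hε
  have hnum : 0 < 4 - 4 * γ * (1 - ε) := by linarith [hγ.2]
  exact div_pos hnum (criticalWeight_denom_pos (Set.Ico_subset_Icc_self hγ) hε)

theorem exactTDFactor_lt_one_iff (hγ : γ ∈ Set.Icc 0 1) (hε : 0 ≤ ε) (hp : p < 4 / 3) :
    exactTDFactor γ ε p < 1 ↔ p < criticalWeight γ ε := by
  have hden : 0 < p + 4 * (1 - p) := by linarith
  rw [exactTDFactor, criticalWeight, div_lt_one hden,
    lt_div_iff₀ (criticalWeight_denom_pos hγ hε)]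
  constructor <;> intro h <;> linarith

theorem abs_exactTDFactor_lt_one_iff (hγ : γ ∈ Set.Icc 0 1) (hε : ε ∈ Set.Icc 0 1)
    (hp : p ∈ Set.Icc 0 1) : |exactTDFactor γ ε p| < 1 ↔ p < criticalWeight γ ε := by
  rw [abs_of_nonneg (exactTDFactor_nonneg hγ.1 hε.2 hp)]
  exact exactTDFactor_lt_one_iff hγ hε.1 (by linarith [hp.2])

end TwoStateTD

theorem stmt_15 (γ ε p : ℝ) (hγ : γ ∈ Set.Ioo (0 : ℝ) 1) (hε : ε ∈ Set.Icc (0 : ℝ) 1)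
    (hp : p ∈ Set.Ioo (0 : ℝ) 1)
    (c : ℝ) (hc : c = (2 * γ * p + 4 * γ * (1 - ε) * (1 - p)) / (p + 4 * (1 - p)))
    (hthr : p < (4 - 4 * γ * (1 - ε)) / (3 + 2 * γ - 4 * γ * (1 - ε))) :
    |c| < 1 ∧
      (∀ θ0 : ℝ,
        Tendsto (fun t : ℕ => (fun x : ℝ => c * x)^[t] θ0) atTop (nhds 0)) ∧
      0 < (4 - 4 * γ * (1 - ε)) / (3 + 2 * γ - 4 * γ * (1 - ε)) := by
  have hc_abs : |c| < 1 := hc ▸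
    (abs_exactTDFactor_lt_one_iff (Set.Ioo_subset_Icc_self hγ) hε
      (Set.Ioo_subset_Icc_self hp)).2 hthr
  exact ⟨hc_abs, tendsto_iterate_mul_left_zero hc_abs,
    criticalWeight_pos (Set.Ioo_subset_Ico_self hγ) hε.1⟩
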